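/- There exists a unital ℂ-algebra homomorphism ι̂ : y_ℏ(sl(n)) → y_ℏ(gl(n)) satisfying ι̂(X^+_{i,0}) = T^{(1)}_{i,i+1}, ι̂(X^−_{i,0}) = T^{(1)}_{i+1,i}, ι̂(H_{i,0}) = T^{(1)}_{i,i} − T^{(1)}_{i+1,i+1}, ι̂(H_{i,1}) = ℋ_i + (ℏ/2)(T^{(1)}_{i,i} − T^{(1)}_{i+1,i+1})² for all 1 ≤ i ≤ n−1, and ι̂(A_{n,1}) = T^{(2)}_{n,n} − ((n−1)/2)ℏ·T^{(1)}_{n,n} + ℏ∑_{u=1}^{n−1} T^{(1)}_{n,u}T^{(1)}_{u,n} + (ℏ/2)(T^{(1)}_{n,n})². -/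

import Mathlib

open scoped BigOperators

noncomputable section

/-- Kronecker delta as a complex scalar. -/
def kd {n : ℕ} (i j : Fin n) : ℂ := if i = j then 1 else 0

/-- The free associative unital `ℂ`-algebra on generators `T^{(r)}_{i,j}`,
`r ∈ ℕ`, `1 ≤ i, j ≤ n` (indices realized as `Fin n`). -/
abbrev FAgl (n : ℕ) := FreeAlgebra ℂ (ℕ × Fin n × Fin n)

/-- The generator `T^{(r)}_{i,j}` of the free algebra. -/
def Tf (n : ℕ) (r : ℕ) (i j : Fin n) : FAgl n := FreeAlgebra.ι ℂ (r, i, j)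

/-- The defining relations of `y_ℏ(gl(n))`:  `T^{(0)}_{i,j} = δ_{i,j}`;
`[T^{(1)}_{i,j}, T^{(r)}_{k,l}] = δ_{j,k}T^{(r)}_{i,l} − δ_{i,l}T^{(r)}_{k,j}`;
`[T^{(2)}_{i,i}, T^{(2)}_{j,j}] = −ℏ(T^{(1)}_{j,i}T^{(2)}_{i,j} − T^{(2)}_{j,i}T^{(1)}_{i,j})`;
`[T^{(2)}_{i,i}, T^{(r)}_{k,l}] = δ_{i,k}T^{(r+1)}_{i,l} − δ_{i,l}T^{(r+1)}_{k,i}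
  − ℏ(T^{(1)}_{k,i}T^{(r)}_{i,l} − T^{(r)}_{k,i}T^{(1)}_{i,l})`. -/
inductive glRel (n : ℕ) (ℏ : ℂ) : FAgl n → FAgl n → Prop
  | T0 (i j : Fin n) :
      glRel n ℏ (Tf n 0 i j) (algebraMap ℂ (FAgl n) (kd i j))
  | R1 (r : ℕ) (i j k l : Fin n) :
      glRel n ℏ ⁅Tf n 1 i j, Tf n r k l⁆
        (kd j k • Tf n r i l - kd i l • Tf n r k j)
  | R2 (i j : Fin n) :
      glRel n ℏ ⁅Tf n 2 i i, Tf n 2 j j⁆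
        (-(ℏ • (Tf n 1 j i * Tf n 2 i j - Tf n 2 j i * Tf n 1 i j)))
  | R3 (r : ℕ) (i k l : Fin n) :
      glRel n ℏ ⁅Tf n 2 i i, Tf n r k l⁆
        (kd i k • Tf n (r + 1) i l - kd i l • Tf n (r + 1) k i
          - ℏ • (Tf n 1 k i * Tf n r i l - Tf n r k i * Tf n 1 i l))

/-- The algebra `y_ℏ(gl(n))`: the quotient of the free algebra by the two-sided ideal
generated by the differences of the two sides of the relations `glRel`. -/
abbrev yGL (n : ℕ) (ℏ : ℂ) := RingQuot (glRel n ℏ)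

/-- The image of `T^{(r)}_{i,j}` in `y_ℏ(gl(n))`. -/
def T (n : ℕ) (ℏ : ℂ) (r : ℕ) (i j : Fin n) : yGL n ℏ :=
  RingQuot.mkAlgHom ℂ (glRel n ℏ) (Tf n r i j)

/-- The element `ℋ_i` of `y_ℏ(gl(n))` for `1 ≤ i ≤ n−1`; here the paper's index `i`
corresponds to the 0-based index `a = i − 1` (so `a + 1 < n`), and
`ℋ_i = T^{(2)}_{i,i} − T^{(2)}_{i+1,i+1} − ((i−1)/2)ℏ(T^{(1)}_{i,i} − T^{(1)}_{i+1,i+1})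
 + ℏ∑_{u=1}^{i−1} T^{(1)}_{i,u}T^{(1)}_{u,i} − ℏ∑_{u=1}^{i} T^{(1)}_{i+1,u}T^{(1)}_{u,i+1}
 + (ℏ/2)((T^{(1)}_{i,i})² − (T^{(1)}_{i+1,i+1})²)`. -/
def HH (n : ℕ) (ℏ : ℂ) (a : ℕ) (h : a + 1 < n) : yGL n ℏ :=
  T n ℏ 2 ⟨a, by omega⟩ ⟨a, by omega⟩ - T n ℏ 2 ⟨a + 1, h⟩ ⟨a + 1, h⟩
    - (((a : ℂ) / 2) * ℏ) • (T n ℏ 1 ⟨a, by omega⟩ ⟨a, by omega⟩ - T n ℏ 1 ⟨a + 1, h⟩ ⟨a + 1, h⟩)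
    + ℏ • (∑ u : Fin a,
        T n ℏ 1 ⟨a, by omega⟩ ⟨u.val, by have := u.isLt; omega⟩ *
          T n ℏ 1 ⟨u.val, by have := u.isLt; omega⟩ ⟨a, by omega⟩)
    - ℏ • (∑ u : Fin (a + 1),
        T n ℏ 1 ⟨a + 1, h⟩ ⟨u.val, by have := u.isLt; omega⟩ *
          T n ℏ 1 ⟨u.val, by have := u.isLt; omega⟩ ⟨a + 1, h⟩)
    + (ℏ / 2) • ((T n ℏ 1 ⟨a, by omega⟩ ⟨a, by omega⟩) ^ 2
        - (T n ℏ 1 ⟨a + 1, h⟩ ⟨a + 1, h⟩) ^ 2)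

/-- Generators of the extended algebra `y_ℏ(sl(n))`: `X^+_{i,r}`, `X^−_{i,r}`, `H_{i,r}`
for `1 ≤ i ≤ n−1` (realized as `Fin (n−1)`), `r ∈ {0,1}` (realized as `Fin 2`),
together with one additional generator `A_{n,1}`. -/
inductive SLAgen (n : ℕ) : Type
  | Xp : Fin (n - 1) → Fin 2 → SLAgen n
  | Xm : Fin (n - 1) → Fin 2 → SLAgen n
  | H : Fin (n - 1) → Fin 2 → SLAgen n
  | A : SLAgen n

/-- The free associative unital `ℂ`-algebra on the generators. -/
abbrev FAsla (n : ℕ) := FreeAlgebra ℂ (SLAgen n)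

/-- Kronecker delta on `Fin (n-1)` as a complex scalar. -/
def kdsl {n : ℕ} (i j : Fin (n - 1)) : ℂ := if i = j then 1 else 0

/-- `X^±_{i,r}` in the free algebra; `b = true` is `+`, `b = false` is `−`. -/
def Xf (n : ℕ) (b : Bool) (i : Fin (n - 1)) (r : Fin 2) : FAsla n :=
  FreeAlgebra.ι ℂ (if b then SLAgen.Xp i r else SLAgen.Xm i r)

/-- `H_{i,r}` in the free algebra. -/
def Hf (n : ℕ) (i : Fin (n - 1)) (r : Fin 2) : FAsla n := FreeAlgebra.ι ℂ (SLAgen.H i r)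

/-- `A_{n,1}` in the free algebra. -/
def Af (n : ℕ) : FAsla n := FreeAlgebra.ι ℂ SLAgen.A

/-- The sign `±1` associated with `b : Bool`. -/
def sgn (b : Bool) : ℂ := if b then 1 else -1

/-- The Cartan matrix of `sl(n)`: `a_{i,i} = 2`, `a_{i,j} = −1` if `|i−j| = 1`,
`a_{i,j} = 0` otherwise. -/
def cartan {n : ℕ} (i j : Fin (n - 1)) : ℂ :=
  if i = j then 2 else if i.val + 1 = j.val ∨ j.val + 1 = i.val then -1 else 0

/-- `1 + |a_{i,j}|` as a natural number. -/
def serrePow {n : ℕ} (i j : Fin (n - 1)) : ℕ :=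
  if i = j then 3 else if i.val + 1 = j.val ∨ j.val + 1 = i.val then 2 else 1

/-- `H̃_{i,1} = H_{i,1} − (ℏ/2)H_{i,0}²` in the free algebra. -/
def Htf (n : ℕ) (ℏ : ℂ) (i : Fin (n - 1)) : FAsla n :=
  Hf n i 1 - (ℏ / 2) • (Hf n i 0) ^ 2

/-- Iterated adjoint action: `adn k x y = (ad x)^k (y)` with `ad x y = [x, y]`. -/
def adn {A : Type*} [Ring A] : ℕ → A → A → A
  | 0, _, y => y
  | k + 1, x, y => ⁅x, adn k x y⁆

/-- The defining relations of the extended algebra `y_ℏ(sl(n))`: the minimalistic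
relations of `Y_ℏ(sl(n))` together with `[H̃_{n−1,1}, A_{n,1}] = 0` and
`[A_{n,1}, X^±_{n−1,0}] = ∓X^±_{n−1,1}`. -/
inductive slaRel (n : ℕ) (ℏ : ℂ) : FAsla n → FAsla n → Prop
  | HHrel (i j : Fin (n - 1)) (r s : Fin 2) : slaRel n ℏ ⁅Hf n i r, Hf n j s⁆ 0
  | XpXm00 (i j : Fin (n - 1)) :
      slaRel n ℏ ⁅Xf n true i 0, Xf n false j 0⁆ (kdsl i j • Hf n i 0)
  | XpXm10 (i j : Fin (n - 1)) :
      slaRel n ℏ ⁅Xf n true i 1, Xf n false j 0⁆ (kdsl i j • Hf n i 1)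
  | XpXm01 (i j : Fin (n - 1)) :
      slaRel n ℏ ⁅Xf n true i 0, Xf n false j 1⁆ (kdsl i j • Hf n i 1)
  | H0X (b : Bool) (i j : Fin (n - 1)) (r : Fin 2) :
      slaRel n ℏ ⁅Hf n i 0, Xf n b j r⁆ ((sgn b * cartan i j) • Xf n b j r)
  | HtX (b : Bool) (i j : Fin (n - 1)) :
      slaRel n ℏ ⁅Htf n ℏ i, Xf n b j 0⁆ ((sgn b * cartan i j) • Xf n b j 1)
  | XX (b : Bool) (i j : Fin (n - 1)) :
      slaRel n ℏ (⁅Xf n b i 1, Xf n b j 0⁆ - ⁅Xf n b i 0, Xf n b j 1⁆)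
        ((sgn b * cartan i j * (ℏ / 2)) •
          (Xf n b i 0 * Xf n b j 0 + Xf n b j 0 * Xf n b i 0))
  | serre (b : Bool) (i j : Fin (n - 1)) (hij : i ≠ j) :
      slaRel n ℏ (adn (serrePow i j) (Xf n b i 0) (Xf n b j 0)) 0
  | HtA (h : n - 2 < n - 1) : slaRel n ℏ ⁅Htf n ℏ ⟨n - 2, h⟩, Af n⁆ 0
  | AX (b : Bool) (h : n - 2 < n - 1) :
      slaRel n ℏ ⁅Af n, Xf n b ⟨n - 2, h⟩ 0⁆ (-(sgn b) • Xf n b ⟨n - 2, h⟩ 1)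

/-- The extended algebra `y_ℏ(sl(n))`: the quotient of the free algebra by the
two-sided ideal generated by the differences of the two sides of `slaRel`. -/
abbrev YSLA (n : ℕ) (ℏ : ℂ) := RingQuot (slaRel n ℏ)

/-- The image of an element of the free algebra in `y_ℏ(sl(n))`. -/
def slamk (n : ℕ) (ℏ : ℂ) (x : FAsla n) : YSLA n ℏ := RingQuot.mkAlgHom ℂ (slaRel n ℏ) x

/-- The element `T^{(2)}_{n,n} − ((n−1)/2)ℏ·T^{(1)}_{n,n}
 + ℏ∑_{u=1}^{n−1} T^{(1)}_{n,u}T^{(1)}_{u,n} + (ℏ/2)(T^{(1)}_{n,n})²` of `y_ℏ(gl(n))`. -/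
def Agl (n : ℕ) (ℏ : ℂ) (hn : 3 ≤ n) : yGL n ℏ :=
  T n ℏ 2 ⟨n - 1, by omega⟩ ⟨n - 1, by omega⟩
    - ((((n : ℂ) - 1) / 2) * ℏ) • T n ℏ 1 ⟨n - 1, by omega⟩ ⟨n - 1, by omega⟩
    + ℏ • (∑ u : Fin (n - 1),
        T n ℏ 1 ⟨n - 1, by omega⟩ ⟨u.val, by have := u.isLt; omega⟩ *
          T n ℏ 1 ⟨u.val, by have := u.isLt; omega⟩ ⟨n - 1, by omega⟩)
    + (ℏ / 2) • (T n ℏ 1 ⟨n - 1, by omega⟩ ⟨n - 1, by omega⟩) ^ 2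

section Commutator

variable {B : Type*} [Ring B]

theorem c_add_lie (x y z : B) : ⁅x + y, z⁆ = ⁅x, z⁆ + ⁅y, z⁆ := by
  simp only [Ring.lie_def]; noncomm_ring
theorem c_sub_lie (x y z : B) : ⁅x - y, z⁆ = ⁅x, z⁆ - ⁅y, z⁆ := by
  simp only [Ring.lie_def]; noncomm_ring
theorem c_lie_add (x y z : B) : ⁅z, x + y⁆ = ⁅z, x⁆ + ⁅z, y⁆ := by
  simp only [Ring.lie_def]; noncomm_ring
theorem c_lie_sub (x y z : B) : ⁅z, x - y⁆ = ⁅z, x⁆ - ⁅z, y⁆ := by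
  simp only [Ring.lie_def]; noncomm_ring
theorem c_smul_lie [Algebra ℂ B] (t : ℂ) (x y : B) : ⁅t • x, y⁆ = t • ⁅x, y⁆ := by
  simp only [Ring.lie_def, smul_mul_assoc, mul_smul_comm, smul_sub]
theorem c_lie_smul [Algebra ℂ B] (t : ℂ) (x y : B) : ⁅x, t • y⁆ = t • ⁅x, y⁆ := by
  simp only [Ring.lie_def, smul_mul_assoc, mul_smul_comm, smul_sub]
@[simp]
theorem c_lie_self (x : B) : ⁅x, x⁆ = 0 := by simp [Ring.lie_def]
@[simp]
theorem c_zero_lie (x : B) : ⁅(0 : B), x⁆ = 0 := by simp [Ring.lie_def]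
theorem c_lie_skew (x y : B) : -⁅y, x⁆ = ⁅x, y⁆ := by simp [Ring.lie_def]
theorem c_leibniz_lie (x y z : B) : ⁅x, ⁅y, z⁆⁆ = ⁅⁅x, y⁆, z⁆ + ⁅y, ⁅x, z⁆⁆ := by
  simp only [Ring.lie_def]; noncomm_ring

theorem mul_lie' (x y z : B) : ⁅x * y, z⁆ = ⁅x, z⁆ * y + x * ⁅y, z⁆ := by
  simp only [Ring.lie_def]; noncomm_ring

theorem lie_mul' (x y z : B) : ⁅z, x * y⁆ = ⁅z, x⁆ * y + x * ⁅z, y⁆ := by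
  simp only [Ring.lie_def]; noncomm_ring

theorem mul_comm_lie (x y : B) : x * y = y * x + ⁅x, y⁆ := by
  simp only [Ring.lie_def]; noncomm_ring

theorem sq_lie_zero {x y : B} (h : ⁅x, y⁆ = 0) : ⁅x ^ 2, y⁆ = 0 := by
  rw [pow_two, mul_lie', h]; simp

theorem lie_zero_symm {x y : B} (h : ⁅x, y⁆ = 0) : ⁅y, x⁆ = 0 := by
  rw [← c_lie_skew, h, neg_zero]

end Commutator

section AbstractPart

set_option linter.unusedSectionVars false
set_option linter.unusedSimpArgs false

variable {B : Type*} [Ring B] [Algebra ℂ B] {n : ℕ}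

/-- The quadratic element `∑_{u ∈ s} E_{i,u} E_{u,j}`. -/
def QQ (E : Fin n → Fin n → B) (s : Finset (Fin n)) (i j : Fin n) : B := ∑ u ∈ s, E i u * E u j

/-- `D_i = F_{i,i} + ℏ ∑_{u<i} E_{i,u} E_{u,i} + (ℏ/2) E_{i,i}²`. -/
def DD (E F : Fin n → Fin n → B) (ℏ : ℂ) (i : Fin n) : B :=
  F i i + ℏ • QQ E (Finset.Iio i) i i + (ℏ / 2) • (E i i) ^ 2

/-- `F_{i,j} + ℏ ∑_{u<m} E_{i,u} E_{u,j}`. -/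
def YY (E F : Fin n → Fin n → B) (ℏ : ℂ) (m i j : Fin n) : B :=
  F i j + ℏ • QQ E (Finset.Iio m) i j

/-- The relations of `E = T^{(1)}`, `F = T^{(2)}` that are needed. -/
structure GoodPair (E F : Fin n → Fin n → B) (ℏ : ℂ) : Prop where
  hE : ∀ i j k l, ⁅E i j, E k l⁆ = kd j k • E i l - kd i l • E k j
  hF : ∀ i j k l, ⁅E i j, F k l⁆ = kd j k • F i l - kd i l • F k j
  hFF : ∀ i j, ⁅F i i, F j j⁆ = -(ℏ • (E j i * F i j - F j i * E i j))

variable {E F : Fin n → Fin n → B} {ℏ : ℂ}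

theorem kd_self (i : Fin n) : kd i i = 1 := by simp [kd]
theorem kd_ne {i j : Fin n} (h : i ≠ j) : kd i j = 0 := by simp [kd, h]
theorem kd_comm (i j : Fin n) : kd i j = kd j i := by simp [kd, eq_comm]

namespace GoodPair

theorem hF' (g : GoodPair E F ℏ) (i j k l : Fin n) :
    ⁅F i j, E k l⁆ = kd j k • F i l - kd i l • F k j := by
  rw [← c_lie_skew, g.hF, kd_comm l i, kd_comm j k]; abel

theorem lieQ (g : GoodPair E F ℏ) (s : Finset (Fin n)) (i j k l : Fin n) :
    ⁅QQ E s i j, E k l⁆ = ((if k ∈ s then (1 : ℂ) else 0) - (if l ∈ s then 1 else 0)) •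
      (E i l * E k j) - kd i l • QQ E s k j + kd j k • QQ E s i l := by
  unfold QQ
  have h1 : ∑ u ∈ s, kd u k • (E i l * E u j) = (if k ∈ s then (1 : ℂ) else 0) • (E i l * E k j) := by
    simp [kd, ite_smul, Finset.sum_ite_eq']
  have h2 : ∑ u ∈ s, kd u l • (E i u * E k j) = (if l ∈ s then (1 : ℂ) else 0) • (E i l * E k j) := by
    simp [kd, ite_smul, Finset.sum_ite_eq']
  rw [LieRing.of_associative_ring_bracket, Finset.sum_mul, Finset.mul_sum, ← Finset.sum_sub_distrib,
    sub_smul, ← h1, ← h2, Finset.smul_sum, Finset.smul_sum, ← Finset.sum_sub_distrib,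
    ← Finset.sum_sub_distrib, ← Finset.sum_add_distrib]
  refine Finset.sum_congr rfl fun u _ => ?_
  have := mul_lie' (E i u) (E u j) (E k l)
  rw [Ring.lie_def, g.hE, g.hE] at this
  rw [this]
  simp only [sub_mul, mul_sub, smul_mul_assoc, mul_smul_comm]
  abel

theorem lieSq (g : GoodPair E F ℏ) (i k l : Fin n) :
    ⁅(E i i) ^ 2, E k l⁆ = (kd i k - kd i l) • (E i i * E k l + E k l * E i i) := by
  have h : ⁅E i i, E k l⁆ = (kd i k - kd i l) • E k l := by
    rw [g.hE]
    by_cases h1 : i = k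
    · subst h1
      by_cases h2 : i = l
      · subst h2; simp
      · simp [kd_self, kd_ne h2]
    · by_cases h2 : i = l
      · subst h2; simp [kd_self, kd_ne h1]
      · simp [kd_ne h1, kd_ne h2]
  rw [pow_two, mul_lie', h]
  simp only [smul_mul_assoc, mul_smul_comm]
  module

theorem lieD (g : GoodPair E F ℏ) (i k l : Fin n) :
    ⁅DD E F ℏ i, E k l⁆ = kd i k • F i l - kd i l • F k i
      + ℏ • (((if k < i then (1 : ℂ) else 0) - (if l < i then 1 else 0)) • (E i l * E k i)
        - kd i l • QQ E (Finset.Iio i) k i + kd i k • QQ E (Finset.Iio i) i l)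
      + (ℏ / 2) • (kd i k - kd i l) • (E i i * E k l + E k l * E i i) := by
  unfold DD
  rw [c_add_lie, c_add_lie, c_smul_lie, c_smul_lie, g.hF', g.lieQ, g.lieSq]
  simp only [Finset.mem_Iio]

theorem lieY (g : GoodPair E F ℏ) (m i j k l : Fin n) :
    ⁅YY E F ℏ m i j, E k l⁆ = kd j k • F i l - kd i l • F k j
      + ℏ • (((if k < m then (1 : ℂ) else 0) - (if l < m then 1 else 0)) • (E i l * E k j)
        - kd i l • QQ E (Finset.Iio m) k j + kd j k • QQ E (Finset.Iio m) i l) := by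
  unfold YY
  rw [c_add_lie, c_smul_lie, g.hF', g.lieQ]
  simp only [Finset.mem_Iio]

theorem Q_succ {a b : Fin n} (h : a.val + 1 = b.val) (i j : Fin n) :
    QQ E (Finset.Iio b) i j = QQ E (Finset.Iio a) i j + E i a * E a j := by
  have : Finset.Iio b = insert a (Finset.Iio a) := by
    ext x; simp only [Finset.mem_Iio, Finset.mem_insert, Fin.lt_def, Fin.ext_iff]; omega
  unfold QQ
  rw [this, Finset.sum_insert (by simp), add_comm]

theorem ht_ne {a b : Fin n} (h : a.val + 1 = b.val) : a ≠ b ∧ b ≠ a ∧ a < b ∧ ¬ b < a := by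
  simp only [ne_eq, Fin.ext_iff, Fin.lt_def]; omega

/-- diagonal elements commute with `D_i` and `E_{i,i}` -/
theorem lieD_diag (g : GoodPair E F ℏ) (i k : Fin n) : ⁅DD E F ℏ i, E k k⁆ = 0 := by
  rw [g.lieD]
  by_cases h : i = k
  · subst h; simp
  · simp [kd_ne h]

theorem lieE_diag (g : GoodPair E F ℏ) (i k : Fin n) : ⁅E i i, E k k⁆ = 0 := by
  rw [g.hE]
  by_cases h : i = k
  · subst h; simp
  · simp [kd_ne h]

theorem D1p (g : GoodPair E F ℏ) {a b : Fin n} (h : a.val + 1 = b.val) :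
    ⁅DD E F ℏ a, E a b⁆ = YY E F ℏ b a b - (ℏ / 2) • E a b := by
  obtain ⟨h1, h2, h3, h4⟩ := ht_ne h
  have := mul_comm_lie (E a b) (E a a)
  rw [g.hE] at this
  rw [g.lieD, YY, Q_succ h, this]
  simp only [kd_self, kd_ne h1, kd_ne h2, lt_irrefl, h3, h4, if_true, if_false]
  module

theorem D2p (g : GoodPair E F ℏ) {a b : Fin n} (h : a.val + 1 = b.val) :
    ⁅DD E F ℏ b, E a b⁆ = - YY E F ℏ b a b - (ℏ / 2) • E a b := by
  obtain ⟨h1, h2, h3, h4⟩ := ht_ne h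
  have := mul_comm_lie (E a b) (E b b)
  rw [g.hE] at this
  rw [g.lieD, YY, Q_succ h, this]
  simp only [kd_self, kd_ne h1, kd_ne h2, lt_irrefl, h3, h4, if_true, if_false]
  module

theorem D1m (g : GoodPair E F ℏ) {a b : Fin n} (h : a.val + 1 = b.val) :
    ⁅DD E F ℏ a, E b a⁆ = - YY E F ℏ b b a + (ℏ / 2) • E b a := by
  obtain ⟨h1, h2, h3, h4⟩ := ht_ne h
  have := mul_comm_lie (E b a) (E a a)
  rw [g.hE] at this
  rw [g.lieD, YY, Q_succ h, this]
  simp only [kd_self, kd_ne h1, kd_ne h2, lt_irrefl, h3, h4, if_true, if_false]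
  module

theorem D2m (g : GoodPair E F ℏ) {a b : Fin n} (h : a.val + 1 = b.val) :
    ⁅DD E F ℏ b, E b a⁆ = YY E F ℏ b b a + (ℏ / 2) • E b a := by
  obtain ⟨h1, h2, h3, h4⟩ := ht_ne h
  have := mul_comm_lie (E b a) (E b b)
  rw [g.hE] at this
  rw [g.lieD, YY, Q_succ h, this]
  simp only [kd_self, kd_ne h1, kd_ne h2, lt_irrefl, h3, h4, if_true, if_false]
  module

theorem D0 (g : GoodPair E F ℏ) {i k l : Fin n} (h1 : i ≠ k) (h2 : i ≠ l) (h3 : k < i ↔ l < i) :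
    ⁅DD E F ℏ i, E k l⁆ = 0 := by
  rw [g.lieD]
  simp [kd_ne h1, kd_ne h2, h3]

/-- The elements `D_i` commute. -/
theorem lieDD_lt (g : GoodPair E F ℏ) {i j : Fin n} (hij : i < j) :
    ⁅DD E F ℏ i, DD E F ℏ j⁆ = 0 := by
  have hne : i ≠ j := ne_of_lt hij
  -- everything in gl_{j-1} commutes with D_j
  have hc : ∀ k l, k < j → l < j → ⁅E k l, DD E F ℏ j⁆ = 0 := by
    intro k l hk hl
    rw [← c_lie_skew, g.D0 (ne_of_gt hk) (ne_of_gt hl) (by simp [hk, hl]), neg_zero]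
  have hQ : ⁅QQ E (Finset.Iio i) i i, DD E F ℏ j⁆ = 0 := by
    unfold QQ
    rw [LieRing.of_associative_ring_bracket, Finset.sum_mul, Finset.mul_sum,
      ← Finset.sum_sub_distrib]
    refine Finset.sum_eq_zero fun u hu => ?_
    have hu' : u < j := lt_trans (Finset.mem_Iio.mp hu) hij
    have := mul_lie' (E i u) (E u i) (DD E F ℏ j)
    rw [Ring.lie_def, hc _ _ hij hu', hc _ _ hu' hij] at this
    rw [this]; simp
  have hsq : ⁅(E i i) ^ 2, DD E F ℏ j⁆ = 0 := by
    rw [pow_two, mul_lie', hc _ _ hij hij]; simp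
  have hFsq : ⁅F i i, (E j j) ^ 2⁆ = 0 := by
    rw [pow_two, lie_mul', g.hF']; simp [kd_ne hne]
  have hFQ : ⁅F i i, QQ E (Finset.Iio j) j j⁆ = E j i * F i j - F j i * E i j := by
    unfold QQ
    have h1 : ∑ u ∈ Finset.Iio j, kd i u • (E j i * F i j - F j i * E i j)
        = E j i * F i j - F j i * E i j := by
      simp [kd, ite_smul, Finset.sum_ite_eq, hij]
    rw [LieRing.of_associative_ring_bracket, Finset.sum_mul, Finset.mul_sum,
      ← Finset.sum_sub_distrib, ← h1]
    refine Finset.sum_congr rfl fun u _ => ?_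
    have := lie_mul' (E j u) (E u j) (F i i)
    rw [Ring.lie_def, g.hF', g.hF'] at this
    rw [this]
    by_cases hu : i = u
    · subst hu; simp [kd_ne hne, kd_self]; abel
    · simp [kd_ne hne, kd_ne hu]
  conv_lhs => rw [DD]
  rw [c_add_lie, c_add_lie, c_smul_lie, c_smul_lie, hQ, hsq, DD, c_lie_add, c_lie_add, c_lie_smul, c_lie_smul,
    g.hFF, hFQ, hFsq]
  simp

theorem lieDD (g : GoodPair E F ℏ) (i j : Fin n) : ⁅DD E F ℏ i, DD E F ℏ j⁆ = 0 := by
  rcases lt_trichotomy i j with h | h | h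
  · exact g.lieDD_lt h
  · rw [h, c_lie_self]
  · rw [← c_lie_skew, g.lieDD_lt h, neg_zero]

end GoodPair

/-- The image of `H̃_{i,1}`. -/
def Ht (E F : Fin n → Fin n → B) (ℏ : ℂ) (a b : Fin n) : B :=
  DD E F ℏ a - DD E F ℏ b - ((a.val : ℂ) / 2 * ℏ) • (E a a - E b b)

/-- The image of `X^+_{i,1}`. -/
def Xp1 (E F : Fin n → Fin n → B) (ℏ : ℂ) (a b : Fin n) : B :=
  YY E F ℏ b a b - ((a.val : ℂ) / 2 * ℏ) • E a b

/-- The image of `X^-_{i,1}`. -/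
def Xm1 (E F : Fin n → Fin n → B) (ℏ : ℂ) (a b : Fin n) : B :=
  YY E F ℏ b b a - ((a.val : ℂ) / 2 * ℏ) • E b a

/-- The Cartan matrix in terms of elements of `Fin n`. -/
def car (a c : Fin n) : ℂ :=
  if a = c then 2 else if a.val + 1 = c.val ∨ c.val + 1 = a.val then -1 else 0

theorem four_cases {a b c d : Fin n} (h : a.val + 1 = b.val) (h' : c.val + 1 = d.val) :
    (c = a ∧ d = b) ∨ (c = b) ∨ (d = a) ∨
      (a ≠ c ∧ a ≠ d ∧ b ≠ c ∧ b ≠ d ∧ (c < a ↔ d < a) ∧ (c < b ↔ d < b) ∧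
        (a < d ↔ b < d) ∧ car a c = 0) := by
  simp only [car, ne_eq, Fin.ext_iff, Fin.lt_def]
  by_cases h1 : c.val = a.val
  · left; omega
  by_cases h2 : c.val = b.val
  · right; left; omega
  by_cases h3 : d.val = a.val
  · right; right; left; omega
  right; right; right
  refine ⟨by omega, by omega, by omega, by omega, by omega, by omega, by omega, ?_⟩
  rw [if_neg (by omega), if_neg (by omega)]

theorem car_self (a : Fin n) : car a a = 2 := by simp [car]
theorem car_succ {a b : Fin n} (h : a.val + 1 = b.val) : car a b = -1 ∧ car b a = -1 := by
  obtain ⟨h1, h2, _⟩ := GoodPair.ht_ne h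
  simp [car, h1, h2, h]

namespace GoodPair

theorem HtXp (g : GoodPair E F ℏ) {a b c d : Fin n} (h : a.val + 1 = b.val)
    (h' : c.val + 1 = d.val) : ⁅Ht E F ℏ a b, E c d⁆ = car a c • Xp1 E F ℏ c d := by
  obtain ⟨h1, h2, h3, h4⟩ := ht_ne h
  obtain ⟨h1', h2', h3', h4'⟩ := ht_ne h'
  have hv : (b.val : ℂ) = a.val + 1 := by rw [← h]; push_cast; ring
  have hv' : (d.val : ℂ) = c.val + 1 := by rw [← h']; push_cast; ring
  rw [Ht, c_sub_lie, c_sub_lie, c_smul_lie, c_sub_lie, Xp1]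
  rcases four_cases h h' with ⟨rfl, rfl⟩ | rfl | rfl | ⟨k1, k2, k3, k4, k5, k6, k7, k8⟩
  · rw [g.D1p h, g.D2p h, g.hE, g.hE, car_self]
    simp only [kd_self, kd_ne h1, kd_ne h2]
    module
  · have : a ≠ d := by rw [ne_eq, Fin.ext_iff]; omega
    rw [g.D0 h1 this (by simp only [Fin.lt_def]; omega), g.D1p h', g.hE, g.hE, (car_succ h).1, hv]
    simp only [kd_self, kd_ne h1, kd_ne this, kd_ne h1']
    module
  · have : b ≠ c := by rw [ne_eq, Fin.ext_iff]; omega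
    rw [g.D2p h', g.D0 this h2 (by simp only [Fin.lt_def]; omega), g.hE, g.hE, (car_succ h').2, hv']
    simp only [kd_self, kd_ne h2, kd_ne this, kd_ne h2']
    module
  · rw [g.D0 k1 k2 k5, g.D0 k3 k4 k6, g.hE, g.hE, k8]
    simp [kd_ne k1, kd_ne k2, kd_ne k3, kd_ne k4]

theorem HtXm (g : GoodPair E F ℏ) {a b c d : Fin n} (h : a.val + 1 = b.val)
    (h' : c.val + 1 = d.val) : ⁅Ht E F ℏ a b, E d c⁆ = -car a c • Xm1 E F ℏ c d := by
  obtain ⟨h1, h2, h3, h4⟩ := ht_ne h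
  obtain ⟨h1', h2', h3', h4'⟩ := ht_ne h'
  have hv : (b.val : ℂ) = a.val + 1 := by rw [← h]; push_cast; ring
  have hv' : (d.val : ℂ) = c.val + 1 := by rw [← h']; push_cast; ring
  rw [Ht, c_sub_lie, c_sub_lie, c_smul_lie, c_sub_lie, Xm1]
  rcases four_cases h h' with ⟨rfl, rfl⟩ | rfl | rfl | ⟨k1, k2, k3, k4, k5, k6, k7, k8⟩
  · rw [g.D1m h, g.D2m h, g.hE, g.hE, car_self]
    simp only [kd_self, kd_ne h1, kd_ne h2]
    module
  · have : a ≠ d := by rw [ne_eq, Fin.ext_iff]; omega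
    rw [g.D0 this h1 (by simp only [Fin.lt_def]; omega), g.D1m h', g.hE, g.hE, (car_succ h).1, hv]
    simp only [kd_self, kd_ne h1, kd_ne this, kd_ne h1']
    module
  · have : b ≠ c := by rw [ne_eq, Fin.ext_iff]; omega
    rw [g.D2m h', g.D0 h2 this (by simp only [Fin.lt_def]; omega), g.hE, g.hE, (car_succ h').2, hv']
    simp only [kd_self, kd_ne h2, kd_ne this, kd_ne h2']
    module
  · rw [g.D0 k2 k1 k5.symm, g.D0 k4 k3 k6.symm, g.hE, g.hE, k8]
    simp [kd_ne k1, kd_ne k2, kd_ne k3, kd_ne k4]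

theorem H0Xp (g : GoodPair E F ℏ) {a b c d : Fin n} (h : a.val + 1 = b.val)
    (h' : c.val + 1 = d.val) : ⁅E a a - E b b, E c d⁆ = car a c • E c d := by
  obtain ⟨h1, h2, h3, h4⟩ := ht_ne h
  obtain ⟨h1', h2', h3', h4'⟩ := ht_ne h'
  rw [c_sub_lie, g.hE, g.hE]
  rcases four_cases h h' with ⟨rfl, rfl⟩ | rfl | rfl | ⟨k1, k2, k3, k4, k5, k6, k7, k8⟩
  · simp only [kd_self, kd_ne h1, kd_ne h2, car_self]
    module
  · have : a ≠ d := by rw [ne_eq, Fin.ext_iff]; omega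
    simp only [kd_self, kd_ne h1, kd_ne this, kd_ne h1', (car_succ h).1]
    module
  · have : b ≠ c := by rw [ne_eq, Fin.ext_iff]; omega
    simp only [kd_self, kd_ne h2, kd_ne this, kd_ne h2', (car_succ h').2]
    module
  · simp [kd_ne k1, kd_ne k2, kd_ne k3, kd_ne k4, k8]

theorem H0Xm (g : GoodPair E F ℏ) {a b c d : Fin n} (h : a.val + 1 = b.val)
    (h' : c.val + 1 = d.val) : ⁅E a a - E b b, E d c⁆ = -car a c • E d c := by
  obtain ⟨h1, h2, h3, h4⟩ := ht_ne h
  obtain ⟨h1', h2', h3', h4'⟩ := ht_ne h'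
  rw [c_sub_lie, g.hE, g.hE]
  rcases four_cases h h' with ⟨rfl, rfl⟩ | rfl | rfl | ⟨k1, k2, k3, k4, k5, k6, k7, k8⟩
  · simp only [kd_self, kd_ne h1, kd_ne h2, car_self]
    module
  · have : a ≠ d := by rw [ne_eq, Fin.ext_iff]; omega
    simp only [kd_self, kd_ne h1, kd_ne this, kd_ne h1', (car_succ h).1]
    module
  · have : b ≠ c := by rw [ne_eq, Fin.ext_iff]; omega
    simp only [kd_self, kd_ne h2, kd_ne this, kd_ne h2', (car_succ h').2]
    module
  · simp [kd_ne k1, kd_ne k2, kd_ne k3, kd_ne k4, k8]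

theorem H0Ht (g : GoodPair E F ℏ) (a b c d : Fin n) :
    ⁅E a a - E b b, Ht E F ℏ c d⁆ = 0 := by
  rw [← c_lie_skew, Ht]
  simp only [c_sub_lie, c_lie_sub, c_smul_lie, g.lieD_diag, g.lieE_diag]
  simp

theorem HtHt (g : GoodPair E F ℏ) (a b c d : Fin n) :
    ⁅Ht E F ℏ a b, Ht E F ℏ c d⁆ = 0 := by
  have h : ∀ i k, ⁅E k k, DD E F ℏ i⁆ = 0 := fun i k => by rw [← c_lie_skew, g.lieD_diag, neg_zero]
  rw [Ht, Ht]
  simp only [c_sub_lie, c_lie_sub, c_smul_lie, c_lie_smul, g.lieD_diag, g.lieE_diag, g.lieDD, h]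
  simp

theorem H00 (g : GoodPair E F ℏ) (a b c d : Fin n) :
    ⁅E a a - E b b, E c c - E d d⁆ = 0 := by
  simp [c_sub_lie, c_lie_sub, g.lieE_diag]

theorem H01 (g : GoodPair E F ℏ) (a b c d : Fin n) :
    ⁅E a a - E b b, Ht E F ℏ c d + (ℏ / 2) • (E c c - E d d) ^ 2⁆ = 0 := by
  rw [c_lie_add, c_lie_smul, g.H0Ht, lie_zero_symm (sq_lie_zero (g.H00 c d a b))]
  simp

theorem H11 (g : GoodPair E F ℏ) (a b c d : Fin n) :
    ⁅Ht E F ℏ a b + (ℏ / 2) • (E a a - E b b) ^ 2,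
      Ht E F ℏ c d + (ℏ / 2) • (E c c - E d d) ^ 2⁆ = 0 := by
  rw [c_add_lie, c_smul_lie, sq_lie_zero (g.H01 a b c d), c_lie_add, c_lie_smul, g.HtHt,
    lie_zero_symm (sq_lie_zero (g.H0Ht c d a b))]
  simp

theorem H0Xp1 (g : GoodPair E F ℏ) {a b c d : Fin n} (h : a.val + 1 = b.val)
    (h' : c.val + 1 = d.val) :
    ⁅E a a - E b b, Xp1 E F ℏ c d⁆ = car a c • Xp1 E F ℏ c d := by
  have e : Xp1 E F ℏ c d = (1 / 2 : ℂ) • ⁅Ht E F ℏ c d, E c d⁆ := by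
    rw [g.HtXp h' h', car_self]; module
  rw [e, c_lie_smul, c_leibniz_lie, g.H0Ht, g.H0Xp h h', c_lie_smul, c_zero_lie]
  module

theorem H0Xm1 (g : GoodPair E F ℏ) {a b c d : Fin n} (h : a.val + 1 = b.val)
    (h' : c.val + 1 = d.val) :
    ⁅E a a - E b b, Xm1 E F ℏ c d⁆ = -car a c • Xm1 E F ℏ c d := by
  have e : Xm1 E F ℏ c d = (-1 / 2 : ℂ) • ⁅Ht E F ℏ c d, E d c⁆ := by
    rw [g.HtXm h' h', car_self]; module
  rw [e, c_lie_smul, c_leibniz_lie, g.H0Ht, g.H0Xm h h', c_lie_smul, c_zero_lie]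
  module

theorem XpXm00 (g : GoodPair E F ℏ) {a b c d : Fin n} (h : a.val + 1 = b.val)
    (h' : c.val + 1 = d.val) : ⁅E a b, E d c⁆ = kd a c • (E a a - E b b) := by
  rw [g.hE]
  by_cases hac : a = c
  · subst hac
    have : b = d := by rw [Fin.ext_iff]; omega
    subst this; simp [kd_self]
  · have : b ≠ d := by rw [ne_eq, Fin.ext_iff]; rw [Fin.ext_iff] at hac; omega
    simp [kd_ne hac, kd_ne this]

theorem XpXm10 (g : GoodPair E F ℏ) {a b c d : Fin n} (h : a.val + 1 = b.val)
    (h' : c.val + 1 = d.val) : ⁅Xp1 E F ℏ a b, E d c⁆ =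
      kd a c • (Ht E F ℏ a b + (ℏ / 2) • (E a a - E b b) ^ 2) := by
  obtain ⟨h1, h2, h3, h4⟩ := ht_ne h
  rw [Xp1, c_sub_lie, c_smul_lie, g.XpXm00 h h', g.lieY]
  by_cases hac : a = c
  · subst hac
    have : b = d := by rw [Fin.ext_iff]; omega
    subst this
    have e : E b b * E a a = E a a * E b b := by
      rw [mul_comm_lie, g.lieE_diag, add_zero]
    rw [Ht, DD, DD, Q_succ h a a]
    simp only [kd_self, pow_two, sub_mul, mul_sub, e, lt_irrefl, h3, if_true, if_false]
    module
  · have h5 : b ≠ d := by rw [ne_eq, Fin.ext_iff]; rw [Fin.ext_iff] at hac; omega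
    rw [kd_ne hac, kd_ne h5]
    have hk : (E a c * E d b) = E a c * E d b := rfl
    have : (d < b ↔ c < b) := by simp only [Fin.lt_def, Fin.ext_iff] at *; omega
    simp [this]

theorem XpXm01 (g : GoodPair E F ℏ) {a b c d : Fin n} (h : a.val + 1 = b.val)
    (h' : c.val + 1 = d.val) : ⁅E a b, Xm1 E F ℏ c d⁆ =
      kd a c • (Ht E F ℏ a b + (ℏ / 2) • (E a a - E b b) ^ 2) := by
  obtain ⟨h1, h2, h3, h4⟩ := ht_ne h
  rw [Xm1, c_lie_sub, c_lie_smul, g.XpXm00 h h', ← c_lie_skew, g.lieY]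
  by_cases hac : a = c
  · subst hac
    have : b = d := by rw [Fin.ext_iff]; omega
    subst this
    have e : E b b * E a a = E a a * E b b := by
      rw [mul_comm_lie, g.lieE_diag, add_zero]
    rw [Ht, DD, DD, Q_succ h a a]
    simp only [kd_self, pow_two, sub_mul, mul_sub, e, lt_irrefl, h3, if_true, if_false]
    module
  · have h5 : b ≠ d := by rw [ne_eq, Fin.ext_iff]; rw [Fin.ext_iff] at hac; omega
    rw [kd_ne hac, kd_ne (Ne.symm hac), kd_ne h5.symm]
    have : (a < d ↔ b < d) := by simp only [Fin.lt_def, Fin.ext_iff] at *; omega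
    simp [this]

theorem XXp_succ (g : GoodPair E F ℏ) {a b d : Fin n} (h : a.val + 1 = b.val)
    (h' : b.val + 1 = d.val) :
    ⁅Xp1 E F ℏ a b, E b d⁆ - ⁅E a b, Xp1 E F ℏ b d⁆ =
      (-1 * (ℏ / 2)) • (E a b * E b d + E b d * E a b) := by
  obtain ⟨h1, h2, h3, h4⟩ := ht_ne h
  obtain ⟨h1', h2', h3', h4'⟩ := ht_ne h'
  have h5 : a ≠ d := by rw [ne_eq, Fin.ext_iff]; omega
  have h6 : a < d := by rw [Fin.lt_def]; omega
  have h7 : ¬ d < b := by rw [Fin.lt_def]; omega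
  have hv : (b.val : ℂ) = a.val + 1 := by rw [← h]; push_cast; ring
  have e := mul_comm_lie (E a b) (E b d)
  rw [g.hE] at e
  rw [Xp1, Xp1, ← c_lie_skew (E a b), c_sub_lie, c_sub_lie, c_smul_lie, c_smul_lie, ← c_lie_skew (E b d) (E a b),
    g.hE, g.lieY, g.lieY, hv, Q_succ h' a d, e]
  simp only [kd_self, kd_ne h1, kd_ne h2, kd_ne h1', kd_ne h2', kd_ne h5, kd_ne h5.symm, lt_irrefl,
    h3, h3', h6, h7, if_true, if_false, e]
  module

theorem XXm_succ (g : GoodPair E F ℏ) {a b d : Fin n} (h : a.val + 1 = b.val)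
    (h' : b.val + 1 = d.val) :
    ⁅Xm1 E F ℏ a b, E d b⁆ - ⁅E b a, Xm1 E F ℏ b d⁆ =
      (1 * (ℏ / 2)) • (E b a * E d b + E d b * E b a) := by
  obtain ⟨h1, h2, h3, h4⟩ := ht_ne h
  obtain ⟨h1', h2', h3', h4'⟩ := ht_ne h'
  have h5 : a ≠ d := by rw [ne_eq, Fin.ext_iff]; omega
  have h6 : a < d := by rw [Fin.lt_def]; omega
  have h7 : ¬ d < b := by rw [Fin.lt_def]; omega
  have hv : (b.val : ℂ) = a.val + 1 := by rw [← h]; push_cast; ring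
  have e := mul_comm_lie (E b a) (E d b)
  rw [g.hE] at e
  rw [Xm1, Xm1, ← c_lie_skew (E b a), c_sub_lie, c_sub_lie, c_smul_lie, c_smul_lie, ← c_lie_skew (E d b) (E b a),
    g.hE, g.lieY, g.lieY, hv, Q_succ h' d a, e]
  simp only [kd_self, kd_ne h1, kd_ne h2, kd_ne h1', kd_ne h2', kd_ne h5, kd_ne h5.symm, lt_irrefl,
    h3, h3', h6, h7, if_true, if_false, e]
  module

theorem XXp (g : GoodPair E F ℏ) {a b c d : Fin n} (h : a.val + 1 = b.val)
    (h' : c.val + 1 = d.val) :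
    ⁅Xp1 E F ℏ a b, E c d⁆ - ⁅E a b, Xp1 E F ℏ c d⁆ =
      (car a c * (ℏ / 2)) • (E a b * E c d + E c d * E a b) := by
  obtain ⟨h1, h2, h3, h4⟩ := ht_ne h
  rcases four_cases h h' with ⟨rfl, rfl⟩ | rfl | rfl | ⟨k1, k2, k3, k4, k5, k6, k7, k8⟩
  · rw [← c_lie_skew (E c d), Xp1, c_sub_lie, c_smul_lie, c_lie_self, g.lieY, car_self]
    simp only [kd_self, kd_ne h1, kd_ne h2, lt_irrefl, h3, if_true, if_false]
    module
  · rw [(car_succ h).1, g.XXp_succ h h']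
  · rw [(car_succ h').2, add_comm (E d b * E c d), ← g.XXp_succ h' h, ← c_lie_skew (E d b),
      ← c_lie_skew (Xp1 E F ℏ d b)]
    abel
  · rw [← c_lie_skew (E a b), Xp1, Xp1, c_sub_lie, c_sub_lie, c_smul_lie, c_smul_lie, g.lieY, g.lieY, g.hE,
      g.hE, k8]
    simp [kd_ne k2, kd_ne k3, kd_ne k2.symm, kd_ne k3.symm, k6, k7]

theorem XXm (g : GoodPair E F ℏ) {a b c d : Fin n} (h : a.val + 1 = b.val)
    (h' : c.val + 1 = d.val) :
    ⁅Xm1 E F ℏ a b, E d c⁆ - ⁅E b a, Xm1 E F ℏ c d⁆ =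
      (-car a c * (ℏ / 2)) • (E b a * E d c + E d c * E b a) := by
  obtain ⟨h1, h2, h3, h4⟩ := ht_ne h
  rcases four_cases h h' with ⟨rfl, rfl⟩ | rfl | rfl | ⟨k1, k2, k3, k4, k5, k6, k7, k8⟩
  · rw [← c_lie_skew (E d c), Xm1, c_sub_lie, c_smul_lie, c_lie_self, g.lieY, car_self]
    simp only [kd_self, kd_ne h1, kd_ne h2, lt_irrefl, h3, if_true, if_false]
    module
  · rw [(car_succ h).1, neg_neg, g.XXm_succ h h']
  · rw [(car_succ h').2, neg_neg, add_comm (E b d * E d c), ← g.XXm_succ h' h, ← c_lie_skew (E b d),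
      ← c_lie_skew (Xm1 E F ℏ d b)]
    abel
  · rw [← c_lie_skew (E b a), Xm1, Xm1, c_sub_lie, c_sub_lie, c_smul_lie, c_smul_lie, g.lieY, g.lieY, g.hE,
      g.hE, k8]
    simp [kd_ne k2, kd_ne k3, kd_ne k2.symm, kd_ne k3.symm, k6, k7]

theorem serre_p (g : GoodPair E F ℏ) {a b c d : Fin n} (h : a.val + 1 = b.val)
    (h' : c.val + 1 = d.val) (hac : a ≠ c) :
    adn (if a.val + 1 = c.val ∨ c.val + 1 = a.val then 2 else 1) (E a b) (E c d) = 0 := by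
  have := Fin.val_ne_of_ne hac
  obtain ⟨h1, h2, h3, h4⟩ := ht_ne h
  obtain ⟨h1', h2', h3', h4'⟩ := ht_ne h'
  split_ifs with hh
  · simp only [adn]
    rw [g.hE, c_lie_sub, c_lie_smul, c_lie_smul, g.hE, g.hE]
    rcases hh with hh | hh
    · have e : b = c := Fin.ext (by omega)
      subst e
      have h5 : a ≠ d := by rw [ne_eq, Fin.ext_iff]; omega
      simp [kd_ne h1, kd_ne h2, kd_ne h5]
    · have e : d = a := Fin.ext (by omega)
      subst e
      have h5 : b ≠ c := by rw [ne_eq, Fin.ext_iff]; omega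
      simp [kd_ne h1, kd_ne h2, kd_ne h5]
  · simp only [adn]
    have h5 : b ≠ c := by rw [ne_eq, Fin.ext_iff]; omega
    have h6 : a ≠ d := by rw [ne_eq, Fin.ext_iff]; omega
    rw [g.hE]; simp [kd_ne h5, kd_ne h6]

theorem serre_m (g : GoodPair E F ℏ) {a b c d : Fin n} (h : a.val + 1 = b.val)
    (h' : c.val + 1 = d.val) (hac : a ≠ c) :
    adn (if a.val + 1 = c.val ∨ c.val + 1 = a.val then 2 else 1) (E b a) (E d c) = 0 := by
  have := Fin.val_ne_of_ne hac
  obtain ⟨h1, h2, h3, h4⟩ := ht_ne h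
  obtain ⟨h1', h2', h3', h4'⟩ := ht_ne h'
  split_ifs with hh
  · simp only [adn]
    rw [g.hE, c_lie_sub, c_lie_smul, c_lie_smul, g.hE, g.hE]
    rcases hh with hh | hh
    · have e : b = c := Fin.ext (by omega)
      subst e
      have h5 : a ≠ d := by rw [ne_eq, Fin.ext_iff]; omega
      simp [kd_ne h1, kd_ne h2, kd_ne h5]
    · have e : d = a := Fin.ext (by omega)
      subst e
      have h5 : b ≠ c := by rw [ne_eq, Fin.ext_iff]; omega
      simp [kd_ne h1, kd_ne h2, kd_ne h5]
  · simp only [adn]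
    have h5 : b ≠ c := by rw [ne_eq, Fin.ext_iff]; omega
    have h6 : a ≠ d := by rw [ne_eq, Fin.ext_iff]; omega
    rw [g.hE]; simp [kd_ne h5, kd_ne h6]

end GoodPair

/-- The image of `A_{n,1}` (with `b` the last index). -/
def AA (E F : Fin n → Fin n → B) (ℏ : ℂ) (b : Fin n) : B :=
  DD E F ℏ b - ((b.val : ℂ) / 2 * ℏ) • E b b

namespace GoodPair

theorem HtA (g : GoodPair E F ℏ) (a b c : Fin n) : ⁅Ht E F ℏ a b, AA E F ℏ c⁆ = 0 := by
  have h : ∀ i k, ⁅E k k, DD E F ℏ i⁆ = 0 := fun i k => by rw [← c_lie_skew, g.lieD_diag, neg_zero]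
  rw [Ht, AA]
  simp only [c_sub_lie, c_lie_sub, c_smul_lie, c_lie_smul, g.lieD_diag, g.lieE_diag, g.lieDD, h]
  simp

theorem AXp (g : GoodPair E F ℏ) {a b : Fin n} (h : a.val + 1 = b.val) :
    ⁅AA E F ℏ b, E a b⁆ = (-1 : ℂ) • Xp1 E F ℏ a b := by
  obtain ⟨h1, h2, h3, h4⟩ := ht_ne h
  have hv : (b.val : ℂ) = a.val + 1 := by rw [← h]; push_cast; ring
  rw [AA, c_sub_lie, c_smul_lie, g.D2p h, g.hE, Xp1, hv]
  simp only [kd_self, kd_ne h2]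
  module

theorem AXm (g : GoodPair E F ℏ) {a b : Fin n} (h : a.val + 1 = b.val) :
    ⁅AA E F ℏ b, E b a⁆ = Xm1 E F ℏ a b := by
  obtain ⟨h1, h2, h3, h4⟩ := ht_ne h
  have hv : (b.val : ℂ) = a.val + 1 := by rw [← h]; push_cast; ring
  rw [AA, c_sub_lie, c_smul_lie, g.D2m h, g.hE, Xm1, hv]
  simp only [kd_self, kd_ne h2]
  module

end GoodPair

end AbstractPart

/-- The pair `(T^{(1)}, T^{(2)})` in `y_ℏ(gl(n))`. -/
theorem goodPair_yGL (n : ℕ) (ℏ : ℂ) : GoodPair (T n ℏ 1) (T n ℏ 2) ℏ where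
  hE i j k l := by
    have := RingQuot.mkAlgHom_rel ℂ (glRel.R1 (n := n) (ℏ := ℏ) 1 i j k l)
    simpa only [Ring.lie_def, map_sub, map_mul, map_smul, T] using this
  hF i j k l := by
    have := RingQuot.mkAlgHom_rel ℂ (glRel.R1 (n := n) (ℏ := ℏ) 2 i j k l)
    simpa only [Ring.lie_def, map_sub, map_mul, map_smul, T] using this
  hFF i j := by
    have := RingQuot.mkAlgHom_rel ℂ (glRel.R2 (n := n) (ℏ := ℏ) i j)
    simpa only [Ring.lie_def, map_sub, map_mul, map_smul, map_neg, T] using this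

/-- index `i` -/
def lo {n : ℕ} (i : Fin (n - 1)) : Fin n := ⟨i.val, by have := i.isLt; omega⟩
/-- index `i + 1` -/
def hi {n : ℕ} (i : Fin (n - 1)) : Fin n := ⟨i.val + 1, by have := i.isLt; omega⟩

theorem lo_hi {n : ℕ} (i : Fin (n - 1)) : (lo i).val + 1 = (hi i).val := rfl

theorem kd_lo {n : ℕ} (i j : Fin (n - 1)) : kd (lo i) (lo j) = kdsl i j := by
  simp [kd, kdsl, lo, Fin.ext_iff]

theorem car_lo {n : ℕ} (i j : Fin (n - 1)) : car (lo i) (lo j) = cartan i j := by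
  unfold car cartan
  by_cases h1 : i = j
  · rw [if_pos h1, if_pos (by rw [h1])]
  · have h1' : lo i ≠ lo j := fun h => h1 (Fin.ext (congrArg Fin.val h :))
    rw [if_neg h1, if_neg h1']
    by_cases h2 : i.val + 1 = j.val ∨ j.val + 1 = i.val
    · rw [if_pos h2]; exact if_pos h2
    · rw [if_neg h2]; exact if_neg h2

theorem sum_Iio {n : ℕ} {B : Type*} [AddCommMonoid B] (f : Fin n → B) (a : ℕ) (h : a < n) :
    ∑ u : Fin a, f ⟨u.val, by have := u.isLt; omega⟩ = ∑ u ∈ Finset.Iio (⟨a, h⟩ : Fin n), f u := by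
  refine Finset.sum_bij (fun u _ => ⟨u.val, by have := u.isLt; omega⟩) ?_ ?_ ?_ ?_
  · intro u _; simp [Fin.lt_def]
  · intro u _ v _ huv; simpa [Fin.ext_iff] using huv
  · intro v hv
    exact ⟨⟨v.val, by simpa [Fin.lt_def] using hv⟩, Finset.mem_univ _, rfl⟩
  · intro u _; rfl

theorem HH_eq (n : ℕ) (ℏ : ℂ) (i : Fin (n - 1)) (h : i.val + 1 < n) :
    HH n ℏ i.val h = Ht (T n ℏ 1) (T n ℏ 2) ℏ (lo i) (hi i) := by
  unfold HH Ht DD QQ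
  rw [sum_Iio (fun u => T n ℏ 1 ⟨i.val, by omega⟩ u * T n ℏ 1 u ⟨i.val, by omega⟩) i.val (by omega),
    sum_Iio (fun u => T n ℏ 1 ⟨i.val + 1, by omega⟩ u * T n ℏ 1 u ⟨i.val + 1, by omega⟩)
      (i.val + 1) (by omega)]
  simp only [lo, hi]
  module

theorem Agl_eq (n : ℕ) (ℏ : ℂ) (hn : 3 ≤ n) :
    Agl n ℏ hn = AA (T n ℏ 1) (T n ℏ 2) ℏ ⟨n - 1, by omega⟩ := by
  unfold Agl AA DD QQ
  rw [sum_Iio (fun u => T n ℏ 1 ⟨n - 1, by omega⟩ u * T n ℏ 1 u ⟨n - 1, by omega⟩) (n - 1)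
    (by omega)]
  have : ((n - 1 : ℕ) : ℂ) = (n : ℂ) - 1 := by
    rw [Nat.cast_sub (by omega)]; simp
  simp only [this]
  module

/-- The images of the generators. -/
def genMap (n : ℕ) (ℏ : ℂ) (hn : 3 ≤ n) : SLAgen n → yGL n ℏ
  | SLAgen.Xp i r => if r = 0 then T n ℏ 1 (lo i) (hi i) else Xp1 (T n ℏ 1) (T n ℏ 2) ℏ (lo i) (hi i)
  | SLAgen.Xm i r => if r = 0 then T n ℏ 1 (hi i) (lo i) else Xm1 (T n ℏ 1) (T n ℏ 2) ℏ (lo i) (hi i)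
  | SLAgen.H i r => if r = 0 then T n ℏ 1 (lo i) (lo i) - T n ℏ 1 (hi i) (hi i) else
      Ht (T n ℏ 1) (T n ℏ 2) ℏ (lo i) (hi i) +
        (ℏ / 2) • (T n ℏ 1 (lo i) (lo i) - T n ℏ 1 (hi i) (hi i)) ^ 2
  | SLAgen.A => AA (T n ℏ 1) (T n ℏ 2) ℏ ⟨n - 1, by omega⟩

/-- The homomorphism on the free algebra. -/
def freeMap (n : ℕ) (ℏ : ℂ) (hn : 3 ≤ n) : FAsla n →ₐ[ℂ] yGL n ℏ :=
  FreeAlgebra.lift ℂ (genMap n ℏ hn)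

section Images
variable (n : ℕ) (ℏ : ℂ) (hn : 3 ≤ n)

theorem fXp0 (i : Fin (n - 1)) : freeMap n ℏ hn (Xf n true i 0) = T n ℏ 1 (lo i) (hi i) := by
  simp [freeMap, Xf, genMap]
theorem fXp1 (i : Fin (n - 1)) : freeMap n ℏ hn (Xf n true i 1) =
    Xp1 (T n ℏ 1) (T n ℏ 2) ℏ (lo i) (hi i) := by
  simp [freeMap, Xf, genMap]
theorem fXm0 (i : Fin (n - 1)) : freeMap n ℏ hn (Xf n false i 0) = T n ℏ 1 (hi i) (lo i) := by
  simp [freeMap, Xf, genMap]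
theorem fXm1 (i : Fin (n - 1)) : freeMap n ℏ hn (Xf n false i 1) =
    Xm1 (T n ℏ 1) (T n ℏ 2) ℏ (lo i) (hi i) := by
  simp [freeMap, Xf, genMap]
theorem fH0 (i : Fin (n - 1)) : freeMap n ℏ hn (Hf n i 0) =
    T n ℏ 1 (lo i) (lo i) - T n ℏ 1 (hi i) (hi i) := by
  simp [freeMap, Hf, genMap]
theorem fH1 (i : Fin (n - 1)) : freeMap n ℏ hn (Hf n i 1) =
    Ht (T n ℏ 1) (T n ℏ 2) ℏ (lo i) (hi i) +
        (ℏ / 2) • (T n ℏ 1 (lo i) (lo i) - T n ℏ 1 (hi i) (hi i)) ^ 2 := by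
  simp [freeMap, Hf, genMap]
theorem fA : freeMap n ℏ hn (Af n) = AA (T n ℏ 1) (T n ℏ 2) ℏ ⟨n - 1, by omega⟩ := by
  simp [freeMap, Af, genMap]
theorem fHt (i : Fin (n - 1)) : freeMap n ℏ hn (Htf n ℏ i) =
    Ht (T n ℏ 1) (T n ℏ 2) ℏ (lo i) (hi i) := by
  rw [Htf, map_sub, map_smul, map_pow, fH0, fH1]; abel

theorem f_lie (x y : FAsla n) :
    freeMap n ℏ hn ⁅x, y⁆ = ⁅freeMap n ℏ hn x, freeMap n ℏ hn y⁆ := by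
  simp only [Ring.lie_def, map_sub, map_mul]

theorem f_adn (k : ℕ) (x y : FAsla n) :
    freeMap n ℏ hn (adn k x y) = adn k (freeMap n ℏ hn x) (freeMap n ℏ hn y) := by
  induction k with
  | zero => rfl
  | succ k ih => simp only [adn, f_lie, ih]

theorem free_rel {x y : FAsla n} (h : slaRel n ℏ x y) :
    freeMap n ℏ hn x = freeMap n ℏ hn y := by
  have g := goodPair_yGL n ℏ
  cases h with
  | HHrel i j r s =>
    rw [f_lie, map_zero]
    have hr : r = 0 ∨ r = 1 := by omega
    have hs : s = 0 ∨ s = 1 := by omega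
    rcases hr with rfl | rfl <;> rcases hs with rfl | rfl
    · rw [fH0, fH0, g.H00]
    · rw [fH0, fH1, g.H01]
    · rw [fH0, fH1, lie_zero_symm (g.H01 _ _ _ _)]
    · rw [fH1, fH1, g.H11]
  | XpXm00 i j =>
    rw [f_lie, map_smul, fXp0, fXm0, fH0, g.XpXm00 (lo_hi i) (lo_hi j), kd_lo]
  | XpXm10 i j =>
    rw [f_lie, map_smul, fXp1, fXm0, fH1, g.XpXm10 (lo_hi i) (lo_hi j), kd_lo]
  | XpXm01 i j =>
    rw [f_lie, map_smul, fXp0, fXm1, fH1, g.XpXm01 (lo_hi i) (lo_hi j), kd_lo]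
  | H0X b i j r =>
    rw [f_lie, map_smul, fH0]
    have hr : r = 0 ∨ r = 1 := by omega
    cases b <;> rcases hr with rfl | rfl
    · rw [fXm0, g.H0Xm (lo_hi i) (lo_hi j), car_lo]; simp [sgn]
    · rw [fXm1, g.H0Xm1 (lo_hi i) (lo_hi j), car_lo]; simp [sgn]
    · rw [fXp0, g.H0Xp (lo_hi i) (lo_hi j), car_lo]; simp [sgn]
    · rw [fXp1, g.H0Xp1 (lo_hi i) (lo_hi j), car_lo]; simp [sgn]
  | HtX b i j =>
    rw [f_lie, map_smul, fHt]
    cases b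
    · rw [fXm0, fXm1, g.HtXm (lo_hi i) (lo_hi j), car_lo]; simp [sgn]
    · rw [fXp0, fXp1, g.HtXp (lo_hi i) (lo_hi j), car_lo]; simp [sgn]
  | XX b i j =>
    rw [map_sub, f_lie, f_lie, map_smul, map_add, map_mul, map_mul]
    cases b
    · rw [fXm0, fXm1, fXm0, fXm1, g.XXm (lo_hi i) (lo_hi j), car_lo]; simp [sgn]
    · rw [fXp0, fXp1, fXp0, fXp1, g.XXp (lo_hi i) (lo_hi j), car_lo]; simp [sgn]
  | serre b i j hij =>
    have hne : lo i ≠ lo j := by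
      intro h; exact hij (Fin.ext (congrArg Fin.val h :))
    have e : serrePow i j = if (lo i).val + 1 = (lo j).val ∨ (lo j).val + 1 = (lo i).val then 2
        else 1 := by
      rw [serrePow, if_neg hij]; rfl
    rw [f_adn, map_zero, e]
    cases b
    · rw [fXm0, fXm0, g.serre_m (lo_hi i) (lo_hi j) hne]
    · rw [fXp0, fXp0, g.serre_p (lo_hi i) (lo_hi j) hne]
  | HtA h =>
    rw [f_lie, map_zero, fHt, fA, g.HtA]
  | AX b h =>
    have e : (⟨n - 1, by omega⟩ : Fin n) = hi ⟨n - 2, h⟩ := by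
      rw [Fin.ext_iff]; simp only [hi]; omega
    rw [f_lie, map_smul, fA, e]
    cases b
    · rw [fXm0, fXm1, g.AXm (lo_hi _)]; simp [sgn]
    · rw [fXp0, fXp1, g.AXp (lo_hi _)]; simp [sgn]

end Images

/-- there exists a unital `ℂ`-algebra homomorphism
`ι̂ : y_ℏ(sl(n)) → y_ℏ(gl(n))` with `ι̂(X^+_{i,0}) = T^{(1)}_{i,i+1}`,
`ι̂(X^−_{i,0}) = T^{(1)}_{i+1,i}`, `ι̂(H_{i,0}) = T^{(1)}_{i,i} − T^{(1)}_{i+1,i+1}`,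
`ι̂(H_{i,1}) = ℋ_i + (ℏ/2)(T^{(1)}_{i,i} − T^{(1)}_{i+1,i+1})²` for all `1 ≤ i ≤ n−1`, and
`ι̂(A_{n,1}) = T^{(2)}_{n,n} − ((n−1)/2)ℏ·T^{(1)}_{n,n}
 + ℏ∑_{u=1}^{n−1} T^{(1)}_{n,u}T^{(1)}_{u,n} + (ℏ/2)(T^{(1)}_{n,n})²`. -/
theorem exists_iota_hat (n : ℕ) (hn : 3 ≤ n) (ℏ : ℂ) :
    ∃ φ : YSLA n ℏ →ₐ[ℂ] yGL n ℏ,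
      (∀ i : Fin (n - 1),
        φ (slamk n ℏ (Xf n true i 0)) =
            T n ℏ 1 ⟨i.val, by have := i.isLt; omega⟩ ⟨i.val + 1, by have := i.isLt; omega⟩ ∧
        φ (slamk n ℏ (Xf n false i 0)) =
            T n ℏ 1 ⟨i.val + 1, by have := i.isLt; omega⟩ ⟨i.val, by have := i.isLt; omega⟩ ∧
        φ (slamk n ℏ (Hf n i 0)) =
            T n ℏ 1 ⟨i.val, by have := i.isLt; omega⟩ ⟨i.val, by have := i.isLt; omega⟩ -
              T n ℏ 1 ⟨i.val + 1, by have := i.isLt; omega⟩ ⟨i.val + 1, by have := i.isLt; omega⟩ ∧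
        φ (slamk n ℏ (Hf n i 1)) =
            HH n ℏ i.val (by have := i.isLt; omega) +
              (ℏ / 2) •
                (T n ℏ 1 ⟨i.val, by have := i.isLt; omega⟩ ⟨i.val, by have := i.isLt; omega⟩ -
                  T n ℏ 1 ⟨i.val + 1, by have := i.isLt; omega⟩
                    ⟨i.val + 1, by have := i.isLt; omega⟩) ^ 2) ∧
      φ (slamk n ℏ (Af n)) = Agl n ℏ hn := by
  refine ⟨RingQuot.liftAlgHom ℂ ⟨freeMap n ℏ hn, fun {x y} h => free_rel n ℏ hn h⟩, ?_, ?_⟩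
  · intro i
    simp only [slamk, RingQuot.liftAlgHom_mkAlgHom_apply]
    rw [fXp0, fXm0, fH0, fH1, HH_eq]
    exact ⟨rfl, rfl, rfl, rfl⟩
  · simp only [slamk, RingQuot.liftAlgHom_mkAlgHom_apply]
    rw [fA, Agl_eq]

end
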